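/- arXiv:0805.2036 — 2 statements merged into one kernel-verified Lean document; each statement's English description precedes it below -/
import Mathlib

section
/- Let Z be a standard Borel space and let A ⊆ Z × H be a Borel set such that for every z ∈ Z the section A_z = {f ∈ H : (z,f) ∈ A} is nonempty, compact, and norm separable. Then there exists a sequence (f_n) of Borel measurable maps f_n : Z → H such that (z, f_n(z)) ∈ A for every z ∈ Z and every n ∈ ℕ, and such that for every z ∈ Z the set {f_n(z) : n ∈ ℕ} is dense in A_z with respect to the metric (f,g) ↦ ‖f−g‖_∞. -/
noncomputable section

/-- `H = [-1,1]^ℕ`, the product of countably many copies of `[-1,1]`, with the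
product topology (and its Borel σ-algebra). -/
abbrev H : Type := ℕ → Set.Icc (-1 : ℝ) 1

/-- The supremum distance `‖f − g‖_∞ = sup_n |f(n) − g(n)|` on `H`. -/
noncomputable def normDist (f g : H) : ℝ := ⨆ n, |(f n : ℝ) - (g n : ℝ)|

/-- The norm diameter of `S ⊆ H`: `sup {‖f − g‖_∞ : f, g ∈ S}`. -/
noncomputable def normDiam (S : Set H) : ℝ :=
  sSup {d : ℝ | ∃ f ∈ S, ∃ g ∈ S, d = normDist f g}

/-- `S ⊆ H` is norm separable: separable w.r.t. the metric `(f,g) ↦ ‖f − g‖_∞`. -/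
def NormSeparable (S : Set H) : Prop :=
  ∃ D : Set H, D.Countable ∧ D ⊆ S ∧ ∀ f ∈ S, ∀ δ : ℝ, 0 < δ → ∃ g ∈ D, normDist f g < δ

/-!
For `ε > 0` the relation `ε < ‖f - g‖_∞` is an open graph on `H`. A dichotomy for open graphs,
uniform in `z`, says that either `A` is a countable union of Borel sets with closed sections of norm
diameter at most `ε`, or some section `A_z` contains a family indexed by the Cantor space whose
members are pairwise more than `ε` apart. The second case contradicts norm separability. It is
produced, when the first one fails, by splitting a piece of `A` that is not covered into two such
pieces joined by the graph, again and again along the binary tree; Novikov's separation theorem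
provides Borel pieces covering the analytic sets that cannot be split.

Each Borel piece has compact sections, so its projection to `Z` is Borel and carries a Borel
selector, which any Borel selector of `A` extends to all of `Z`. Letting `ε = 1 / (m + 1)` vary
gives countably many selectors of `A`, and they are norm dense.
-/

open Filter Function MeasureTheory Set TopologicalSpace Topology

section Novikov

variable {E : ℕ → Type*}

theorem exists_forall_cylinder_of_forall_update [∀ n, Nonempty (E n)] {p : Set (∀ n, E n) → Prop}
    (hp : p univ)
    (hstep : ∀ x n, p (PiNat.cylinder x n) → ∃ c, p (PiNat.cylinder (update x n c) (n + 1))) :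
    ∃ x : ∀ n, E n, ∀ n, p (PiNat.cylinder x n) := by
  choose! c hc using hstep
  let w : ℕ → ∀ n, E n := Nat.rec (fun _ => Classical.arbitrary _) fun n x => update x n (c x n)
  have hw (n) : w (n + 1) = update (w n) n (c (w n) n) := rfl
  have hpw (n) : p (PiNat.cylinder (w n) n) := by
    induction n with
    | zero => simpa using hp
    | succ n ih => exact hc _ _ ih
  have hw_apply (k n) (hkn : k < n) : w n k = w (k + 1) k := by
    induction n, hkn using Nat.le_induction with
    | base => rfl
    | succ n hkn ih => rw [hw, update_of_ne (by omega), ih]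
  refine ⟨fun k => w (k + 1) k, fun n => ?_⟩
  convert! hpw n using 1
  exact (PiNat.mem_cylinder_iff_eq.1 fun k hk => (hw_apply k n hk).symm)

theorem exists_cylinder_subset_of_mem_nhds [∀ n, TopologicalSpace (E n)]
    [∀ n, DiscreteTopology (E n)] {x : ∀ n, E n} {O : Set (∀ n, E n)} (hO : O ∈ 𝓝 x) :
    ∃ n, PiNat.cylinder x n ⊆ O := by
  obtain ⟨_, ⟨y, n, rfl⟩, hxy, hyO⟩ :=
    (PiNat.isTopologicalBasis_cylinders E).mem_nhds_iff.1 hO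
  exact ⟨n, (PiNat.mem_cylinder_iff_eq.1 hxy).trans_subset hyO⟩

theorem image_cylinder_subset_image_cylinder_update {α : Type*} {ψ : (∀ n, E n) → α}
    {n : ℕ} (hψ : ∀ w c, ψ (update w n c) = ψ w) (x : ∀ n, E n) (c : E n) :
    ψ '' PiNat.cylinder x n ⊆ ψ '' PiNat.cylinder (update x n c) (n + 1) := by
  rintro _ ⟨w, hw, rfl⟩
  refine ⟨update w n c, fun k hk => ?_, hψ w c⟩
  rcases (Nat.lt_succ_iff_lt_or_eq.1 hk) with hkn | rfl
  · simpa [hkn.ne] using hw k hkn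
  · simp

/-- The parametrizations share one Baire space, but coordinate `n` affects only the set of index
`o n`, so that fixing one more coordinate refines one set at a time. -/
theorem exists_continuous_range_eq_of_analyticSet {ι X : Type*} [Nonempty ι] [Countable ι]
    [TopologicalSpace X] {S : ι → Set X} (hS : ∀ i, AnalyticSet (S i)) (hne : ∀ i, (S i).Nonempty) :
    ∃ (ψ : ι → (ℕ → ℕ) → X) (o : ℕ → ι), (∀ i, Continuous (ψ i)) ∧ (∀ i, range (ψ i) = S i) ∧
      ∀ n, ∀ i ≠ o n, ∀ w c, ψ i (update w n c) = ψ i w := by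
  have hrange (i) : ∃ f : (ℕ → ℕ) → X, Continuous f ∧ range f = S i :=
    (AnalyticSet_def (S i) ▸ hS i).resolve_left (hne i).ne_empty
  choose φ hφ hφS using hrange
  obtain ⟨_⟩ := nonempty_denumerable (ι × ℕ)
  let e : ι × ℕ ≃ ℕ := Denumerable.eqv _
  refine ⟨fun i (w : ℕ → ℕ) => φ i fun j => w (e (i, j)), fun n => (e.symm n).1,
    fun i => ?_, fun i => ?_, ?_⟩
  · fun_prop
  · rw [← hφS i]
    refine (range_comp_subset_range (fun (w : ℕ → ℕ) j => w (e (i, j))) (φ i)).antisymm ?_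
    rintro _ ⟨x, rfl⟩
    exact ⟨fun n => x (e.symm n).2, by simp⟩
  · intro n i hi w c
    refine congrArg (φ i) (funext fun j => update_of_ne ?_ _ _)
    rintro rfl
    simp at hi

variable {ι X : Type*} [MeasurableSpace X]

/-- A family of sets is *jointly measurably separable* if it can be enlarged to a family of
measurable sets with empty intersection; for two sets this is `MeasurablySeparable`. -/
def JointlyMeasurablySeparable (S : ι → Set X) : Prop :=
  ∃ B : ι → Set X, (∀ i, MeasurableSet (B i)) ∧ (∀ i, S i ⊆ B i) ∧ ⋂ i, B i = ∅

theorem jointlyMeasurablySeparable_of_measurablySeparable {S : ι → Set X} {i j : ι} (hij : i ≠ j)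
    (h : MeasurablySeparable (S i) (S j)) : JointlyMeasurablySeparable S := by
  classical
  obtain ⟨u, hiu, hju, hu⟩ := h
  refine ⟨update (update (fun _ => univ) j uᶜ) i u, fun k => ?_, fun k => ?_, ?_⟩
  · rcases eq_or_ne k i with rfl | hki
    · simpa using hu
    rcases eq_or_ne k j with rfl | hkj
    · simpa [hki] using hu
    · simp [hki, hkj]
  · rcases eq_or_ne k i with rfl | hki
    · simpa using hiu
    rcases eq_or_ne k j with rfl | hkj
    · simpa [hki] using hju.subset_compl_right
    · simp [hki, hkj]
  · refine eq_empty_of_forall_notMem fun x hx => ?_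
    have hxi := mem_iInter.1 hx i
    have hxj := mem_iInter.1 hx j
    simp only [update_self, update_of_ne hij.symm] at hxi hxj
    exact hxj hxi

theorem JointlyMeasurablySeparable.of_forall_refinement {κ : Type*} [Countable κ] {S : ι → Set X}
    {T : κ → ι → Set X} (i : ι) (hi : S i ⊆ ⋃ c, T c i) (hne : ∀ c, ∀ k ≠ i, S k ⊆ T c k)
    (hT : ∀ c, JointlyMeasurablySeparable (T c)) : JointlyMeasurablySeparable S := by
  classical
  choose B hBm hTB hB using hT
  refine ⟨update (fun k => ⋂ c, B c k) i (⋃ c, B c i), fun k => ?_, fun k => ?_, ?_⟩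
  · rcases eq_or_ne k i with rfl | hki
    · simpa using MeasurableSet.iUnion fun c => hBm c k
    · simpa [hki] using MeasurableSet.iInter fun c => hBm c k
  · rcases eq_or_ne k i with rfl | hki
    · simpa using hi.trans (iUnion_mono fun c => hTB c k)
    · simpa [hki] using fun c => (hne c k hki).trans (hTB c k)
  · refine eq_empty_of_forall_notMem fun x hx => ?_
    rw [mem_iInter] at hx
    obtain ⟨c, hxc⟩ : ∃ c, x ∈ B c i := by simpa using hx i
    refine eq_empty_iff_forall_notMem.1 (hB c) x (mem_iInter.2 fun k => ?_)
    rcases eq_or_ne k i with rfl | hki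
    · exact hxc
    · have hxk : ∀ c, x ∈ B c k := by simpa [hki] using hx k
      exact hxk c

/-- **Novikov separation theorem**. -/
theorem jointlyMeasurablySeparable_of_analyticSet [Countable ι] [TopologicalSpace X] [T2Space X]
    [OpensMeasurableSpace X] {S : ι → Set X} (hS : ∀ i, AnalyticSet (S i)) (h : ⋂ i, S i = ∅) :
    JointlyMeasurablySeparable S := by
  rcases isEmpty_or_nonempty ι with hι | hι
  · exact ⟨S, isEmptyElim, isEmptyElim, h⟩
  by_cases hne : ∀ i, (S i).Nonempty
  swap
  · simp only [not_forall, not_nonempty_iff_eq_empty] at hne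
    obtain ⟨i, hi⟩ := hne
    exact .of_forall_refinement (κ := Empty) (T := isEmptyElim) i (by simp [hi]) isEmptyElim
      isEmptyElim
  obtain ⟨ψ, o, hψ, hψS, hψo⟩ := exists_continuous_range_eq_of_analyticSet hS hne
  by_contra hsep
  obtain ⟨w, hw⟩ : ∃ w : ℕ → ℕ, ∀ n,
      ¬ JointlyMeasurablySeparable fun i => ψ i '' PiNat.cylinder w n := by
    refine exists_forall_cylinder_of_forall_update
      (p := fun U => ¬ JointlyMeasurablySeparable fun i => ψ i '' U)
      (by simpa [hψS] using hsep) fun x n => ?_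
    contrapose!
    refine .of_forall_refinement (o n) ?_ fun c k hk =>
      image_cylinder_subset_image_cylinder_update (hψo n k hk) x c
    rw [← image_iUnion]
    exact image_mono (PiNat.iUnion_cylinder_update x n).superset
  obtain ⟨i, j, hij⟩ : ∃ i j, ψ i w ≠ ψ j w := by
    by_contra! heq
    refine (h ▸ notMem_empty (ψ hι.some w) : ψ hι.some w ∉ ⋂ i, S i) (mem_iInter.2 fun i => ?_)
    exact hψS i ▸ heq hι.some i ▸ mem_range_self w
  obtain ⟨O, P, hO, hP, hwO, hwP, hOP⟩ := t2_separation hij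
  obtain ⟨n, hn⟩ := exists_cylinder_subset_of_mem_nhds (inter_mem
    ((hψ i).continuousAt (hO.mem_nhds hwO)) ((hψ j).continuousAt (hP.mem_nhds hwP)))
  refine hw n (jointlyMeasurablySeparable_of_measurablySeparable (ne_of_apply_ne (ψ · w) hij)
    ⟨O, ?_, hOP.symm.mono_left ?_, hO.measurableSet⟩)
  · exact image_subset_iff.2 (hn.trans inter_subset_left)
  · exact image_subset_iff.2 (hn.trans inter_subset_right)

end Novikov

section Uniformization

theorem analyticSet_inter {X : Type*} [TopologicalSpace X] [T2Space X] {S T : Set X}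
    (hS : AnalyticSet S) (hT : AnalyticSet T) : AnalyticSet (S ∩ T) := by
  rw [inter_eq_iInter]
  exact .iInter (Bool.forall_bool.2 ⟨hT, hS⟩)

theorem analyticSet_union {X : Type*} [TopologicalSpace X] {S T : Set X}
    (hS : AnalyticSet S) (hT : AnalyticSet T) : AnalyticSet (S ∪ T) := by
  rw [union_eq_iUnion]
  exact .iUnion (Bool.forall_bool.2 ⟨hT, hS⟩)

theorem exists_measurableSet_disjoint_subset_iUnion_prod {Z Y ι : Type*} [TopologicalSpace Z]
    [PolishSpace Z] [MeasurableSpace Z] [BorelSpace Z] [TopologicalSpace Y] [PolishSpace Y]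
    [MeasurableSpace Y] [BorelSpace Y] [Countable ι] {B : Set (Z × Y)} (hB : AnalyticSet B)
    {P : ι → Set Z} (hP : ∀ i, AnalyticSet (P i)) {V : ι → Set Y} (hV : ∀ i, MeasurableSet (V i))
    (hBPV : B ⊆ ⋃ i, (P i)ᶜ ×ˢ V i) :
    ∃ C : ι → Set Z, (∀ i, MeasurableSet (C i)) ∧ (∀ i, Disjoint (P i) (C i)) ∧
      B ⊆ ⋃ i, C i ×ˢ V i := by
  rcases isEmpty_or_nonempty ι with hι | hι
  · exact ⟨isEmptyElim, isEmptyElim, isEmptyElim, by simpa using hBPV⟩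
  have hS (i) : AnalyticSet (B ∩ (Prod.fst ⁻¹' P i ∪ (Prod.snd ⁻¹' V i)ᶜ)) :=
    analyticSet_inter hB (analyticSet_union ((hP i).preimage continuous_fst)
      (measurable_snd (hV i)).compl.analyticSet)
  obtain ⟨D, hDm, hSD, hD⟩ := jointlyMeasurablySeparable_of_analyticSet hS <| by
    refine eq_empty_of_forall_notMem fun x hx => ?_
    rw [mem_iInter] at hx
    obtain ⟨i, hxP, hxV⟩ := mem_iUnion.1 (hBPV (hx hι.some).1)
    exact (hx i).2.elim hxP fun hxV' => hxV' hxV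
  have hsep (i) : MeasurablySeparable (Prod.fst '' (B \ D i)) (P i) := by
    refine ((analyticSet_inter hB (hDm i).compl.analyticSet).image_of_continuous
      continuous_fst).measurablySeparable (hP i) (disjoint_left.2 ?_)
    rintro _ ⟨x, ⟨hxB, hxD⟩, rfl⟩ hxP
    exact hxD (hSD i ⟨hxB, Or.inl hxP⟩)
  choose C hBC hPC hCm using hsep
  refine ⟨C, hCm, hPC, fun x hxB => ?_⟩
  obtain ⟨i, hi⟩ : ∃ i, x ∉ D i := by simpa using eq_empty_iff_forall_notMem.1 hD x
  refine mem_iUnion.2 ⟨i, hBC i ⟨x, ⟨hxB, hi⟩, rfl⟩, ?_⟩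
  by_contra hxi
  exact hi (hSD i ⟨hxB, Or.inr hxi⟩)

variable {Z Y : Type*} [MeasurableSpace Z] [StandardBorelSpace Z] [TopologicalSpace Y]
  [PolishSpace Y] [MeasurableSpace Y] [BorelSpace Y]

/-- **Kunugi–Novikov theorem**. -/
theorem exists_measurableSet_eq_iUnion_prod {ι : Type*} [Countable ι] {V : ι → Set Y}
    (hV : IsTopologicalBasis (range V)) {B : Set (Z × Y)} (hB : MeasurableSet B)
    (hopen : ∀ z, IsOpen {y | (z, y) ∈ B}) :
    ∃ C : ι → Set Z, (∀ i, MeasurableSet (C i)) ∧ B = ⋃ i, C i ×ˢ V i := by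
  let := upgradeStandardBorel Z
  have hVm (i) : MeasurableSet (V i) := (hV.isOpen (mem_range_self i)).measurableSet
  let P : ι → Set Z := fun i => Prod.fst '' (Bᶜ ∩ Prod.snd ⁻¹' V i)
  have hP (i) : AnalyticSet (P i) :=
    (hB.compl.inter (measurable_snd (hVm i))).analyticSet.image_of_continuous continuous_fst
  obtain ⟨C, hCm, hPC, hBC⟩ :=
      exists_measurableSet_disjoint_subset_iUnion_prod hB.analyticSet hP hVm <| by
    rintro ⟨z, y⟩ hzy
    obtain ⟨_, ⟨i, rfl⟩, hyi, hiB⟩ := hV.exists_subset_of_mem_open hzy (hopen z)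
    refine mem_iUnion.2 ⟨i, ?_, hyi⟩
    rintro ⟨⟨_, y'⟩, ⟨hy', hyi'⟩, rfl⟩
    exact hy' (hiB hyi')
  refine ⟨C, hCm, hBC.antisymm (iUnion_subset fun i x hx => ?_)⟩
  by_contra hxB
  exact disjoint_right.1 (hPC i) hx.1 ⟨x, ⟨hxB, hx.2⟩, rfl⟩

theorem measurableSet_image_fst_of_isClosed [CompactSpace Y] {B : Set (Z × Y)}
    (hB : MeasurableSet B) (hclosed : ∀ z, IsClosed {y | (z, y) ∈ B}) :
    MeasurableSet (Prod.fst '' B) := by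
  obtain ⟨C, hCm, hBC⟩ := exists_measurableSet_eq_iUnion_prod
    (V := ((↑) : countableBasis Y → Set Y)) (by simpa using isBasis_countableBasis Y) hB.compl
    fun z => (hclosed z).isOpen_compl
  have hmem (z y) : (z, y) ∉ B ↔ ∃ i, z ∈ C i ∧ y ∈ i.1 := by
    simpa using Set.ext_iff.1 hBC (z, y)
  have hcompl : (Prod.fst '' B)ᶜ = ⋃ F : {F : Finset (countableBasis Y) // univ ⊆ ⋃ i ∈ F, i.1},
      ⋂ i ∈ F.1, C i := by
    ext z
    constructor
    · intro hz
      obtain ⟨F, hFC, hF, hFuniv⟩ := isCompact_univ.elim_finite_subcover_image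
        (b := {i | z ∈ C i}) (fun i _ => isOpen_of_mem_countableBasis i.2) fun y _ => by
          simpa using (hmem z y).1 fun hzy => hz ⟨_, hzy, rfl⟩
      refine mem_iUnion.2 ⟨⟨hF.toFinset, by simpa using hFuniv⟩, ?_⟩
      simpa [subset_def] using hFC
    · rintro hz ⟨⟨_, y⟩, hzy, rfl⟩
      obtain ⟨⟨F, hFuniv⟩, hF⟩ := mem_iUnion.1 hz
      obtain ⟨i, hi, hyi⟩ := mem_iUnion₂.1 (hFuniv (mem_univ y))
      exact (hmem _ y).2 ⟨i, mem_iInter₂.1 hF i hi, hyi⟩ hzy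
  rw [← MeasurableSet.compl_iff, hcompl]
  exact .iUnion fun F => Finset.measurableSet_biInter _ fun i _ => hCm i

theorem measurableSet_image_fst_of_isCompact {B : Set (Z × Y)} (hB : MeasurableSet B)
    (hcpt : ∀ z, IsCompact {y | (z, y) ∈ B}) : MeasurableSet (Prod.fst '' B) := by
  let := upgradeIsCompletelyMetrizable Y
  obtain ⟨j, hj⟩ := Metric.PiNatEmbed.exists_embedding_to_hilbert_cube (X := Y)
  have hjm : MeasurableEmbedding (Prod.map id j : Z × Y → Z × (ℕ → unitInterval)) :=
    MeasurableEmbedding.id.prodMap (hj.continuous.measurableEmbedding hj.injective)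
  rw [show (Prod.fst : Z × Y → Z) = Prod.fst ∘ Prod.map id j from rfl, image_comp]
  refine measurableSet_image_fst_of_isClosed (hjm.measurableSet_image.2 hB) fun z => ?_
  convert! ((hcpt z).image hj.continuous).isClosed using 1
  ext u
  simp

theorem exists_measurable_selector_of_injective {B : Set (Z × Y)} (hB : MeasurableSet B)
    (hne : ∀ z, {y | (z, y) ∈ B}.Nonempty) (hcpt : ∀ z, IsCompact {y | (z, y) ∈ B})
    {e : Y → ℝ} (he : Continuous e) (he_inj : Injective e) :
    ∃ f : Z → Y, Measurable f ∧ ∀ z, (z, f z) ∈ B := by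
  have hmin (z) : ∃ y, (z, y) ∈ B ∧ ∀ y', (z, y') ∈ B → e y ≤ e y' :=
    (hcpt z).exists_isMinOn (hne z) he.continuousOn
  choose f hfB hf using hmin
  refine ⟨f, (he.measurableEmbedding he_inj).measurable_comp_iff.1 ?_, hfB⟩
  refine measurable_of_Iic fun r => ?_
  have hpre : e ∘ f ⁻¹' Iic r = Prod.fst '' (B ∩ Prod.snd ⁻¹' (e ⁻¹' Iic r)) := by
    refine Subset.antisymm (fun z hz => ⟨(z, f z), ⟨hfB z, hz⟩, rfl⟩) ?_
    rintro _ ⟨⟨z, y⟩, ⟨hzy, hy⟩, rfl⟩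
    exact (hf z y hzy).trans hy
  have hclosed : IsClosed (e ⁻¹' Iic r) := isClosed_Iic.preimage he
  rw [hpre]
  exact measurableSet_image_fst_of_isCompact (hB.inter (measurable_snd hclosed.measurableSet))
    fun z => (hcpt z).inter_right hclosed

theorem exists_measurable_selector_of_isCompact {B : Set (Z × Y)} (hB : MeasurableSet B)
    (hne : ∀ z, {y | (z, y) ∈ B}.Nonempty) (hcpt : ∀ z, IsCompact {y | (z, y) ∈ B}) :
    ∃ f : Z → Y, Measurable f ∧ ∀ z, (z, f z) ∈ B := by
  let := upgradeIsCompletelyMetrizable Y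
  obtain ⟨j, hj⟩ := Metric.PiNatEmbed.exists_embedding_to_hilbert_cube (X := Y)
  have hjm : MeasurableEmbedding j := hj.continuous.measurableEmbedding hj.injective
  have : PolishSpace (ℕ → Bool) := {}
  -- Pulled back to the Cantor space, which embeds into `ℝ`, the selector takes least elements.
  have hsection (z) : {t | (z, cantorToHilbert t) ∈ Prod.map id j '' B} =
      cantorToHilbert ⁻¹' (j '' {y | (z, y) ∈ B}) := by
    ext t
    simp
  obtain ⟨g, hg, hgB⟩ := exists_measurable_selector_of_injective
    (B := Prod.map id cantorToHilbert ⁻¹' (Prod.map id j '' B))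
    (measurable_id.prodMap cantorToHilbert_continuous.measurable
      ((MeasurableEmbedding.id.prodMap hjm).measurableSet_image.2 hB))
    (fun z => (hsection z).symm ▸ ((hne z).image j).preimage cantorToHilbert_surjective)
    (fun z => (hsection z).symm ▸
      (((hcpt z).image hj.continuous).isClosed.preimage cantorToHilbert_continuous).isCompact)
    (continuous_subtype_val.comp cantorSetHomeomorphNatToBool.symm.continuous)
    (Subtype.val_injective.comp cantorSetHomeomorphNatToBool.symm.injective)
  have hlift (z) : ∃ y, (z, y) ∈ B ∧ j y = cantorToHilbert (g z) := by simpa using hgB z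
  choose f hfB hfg using hlift
  refine ⟨f, hjm.measurable_comp_iff.1 ?_, hfB⟩
  rw [show j ∘ f = cantorToHilbert ∘ g from funext hfg]
  exact cantorToHilbert_continuous.measurable.comp hg

theorem exists_measurable_selector_of_subset {A B : Set (Z × Y)} (hA : MeasurableSet A)
    (hAne : ∀ z, {y | (z, y) ∈ A}.Nonempty) (hAcpt : ∀ z, IsCompact {y | (z, y) ∈ A})
    (hB : MeasurableSet B) (hBcpt : ∀ z, IsCompact {y | (z, y) ∈ B}) (hBA : B ⊆ A) :
    ∃ f : Z → Y, Measurable f ∧ (∀ z, (z, f z) ∈ A) ∧ ∀ z y, (z, y) ∈ B → (z, f z) ∈ B := by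
  classical
  have hproj := measurableSet_image_fst_of_isCompact hB hBcpt
  have hsection (z) : {y | (z, y) ∈ B ∪ A ∩ Prod.fst ⁻¹' (Prod.fst '' B)ᶜ} =
      if z ∈ Prod.fst '' B then {y | (z, y) ∈ B} else {y | (z, y) ∈ A} := by
    split_ifs with hz
    · simp [hz]
    · ext y
      exact ⟨fun h => h.elim (@hBA _) And.left, fun h => Or.inr ⟨h, hz⟩⟩
  have hne (z) : {y | (z, y) ∈ B ∪ A ∩ Prod.fst ⁻¹' (Prod.fst '' B)ᶜ}.Nonempty := by
    rw [hsection]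
    split_ifs with hz
    · obtain ⟨⟨_, y⟩, hy, rfl⟩ := hz
      exact ⟨y, hy⟩
    · exact hAne z
  have hcpt (z) : IsCompact {y | (z, y) ∈ B ∪ A ∩ Prod.fst ⁻¹' (Prod.fst '' B)ᶜ} := by
    rw [hsection]
    split_ifs
    exacts [hBcpt z, hAcpt z]
  obtain ⟨f, hf, hfB⟩ := exists_measurable_selector_of_isCompact
    (hB.union (hA.inter (measurable_fst hproj.compl))) hne hcpt
  refine ⟨f, hf, fun z => (hfB z).elim (@hBA _) And.left, fun z y hzy => ?_⟩
  exact (hfB z).resolve_right fun hz => hz.2 ⟨(z, y), hzy, rfl⟩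

end Uniformization

section OpenGraphDichotomy

variable {Z Y : Type*}

/-- A set `S ⊆ Z × Y` is *fiber independent* for a directed graph `G` on `Y` if no edge of `G`
joins two points of the same section `S_z`. -/
def IsFiberIndependent (G : Set (Y × Y)) (S : Set (Z × Y)) : Prop :=
  ∀ z y y', (z, y) ∈ S → (z, y') ∈ S → (y, y') ∉ G

/-- The sets allowed in a countable decomposition of `A ⊆ Z × Y`: measurable subsets of `A` with
closed sections, fiber independent for the graph `G`. -/
structure IsIndependentPiece [MeasurableSpace Z] [TopologicalSpace Y] [MeasurableSpace Y]
    (G : Set (Y × Y)) (A B : Set (Z × Y)) : Prop where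
  measurableSet : MeasurableSet B
  subset : B ⊆ A
  isClosed_section : ∀ z, IsClosed {y | (z, y) ∈ B}
  isFiberIndependent : IsFiberIndependent G B

theorem isIndependentPiece_empty [MeasurableSpace Z] [TopologicalSpace Y] [MeasurableSpace Y]
    (G : Set (Y × Y)) (A : Set (Z × Y)) : IsIndependentPiece G A ∅ :=
  ⟨.empty, empty_subset A, fun _ => isClosed_empty, fun _ _ _ h => h.elim⟩

/-- The points `z` over which the section `S_z` meets both sides of one of the rectangles
`R false n ×ˢ R true n`. -/
def splitBase (R : Bool → ℕ → Set Y) (S : Set (Z × Y)) : Set Z :=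
  ⋃ n, ⋂ b, Prod.fst '' (S ∩ Prod.snd ⁻¹' R b n)

theorem mem_splitBase {R : Bool → ℕ → Set Y} {S : Set (Z × Y)} {z : Z} :
    z ∈ splitBase R S ↔ ∃ n, ∀ b, ∃ y ∈ R b n, (z, y) ∈ S := by
  simp [splitBase, and_comm]

theorem exists_isOpen_eq_iUnion_prod [TopologicalSpace Y] [SecondCountableTopology Y]
    [RegularSpace Y] {G : Set (Y × Y)} (hG : IsOpen G) :
    ∃ R : Bool → ℕ → Set Y, (∀ b n, IsOpen (R b n)) ∧ G = ⋃ n, R false n ×ˢ R true n ∧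
      ∀ n, closure (R false n) ×ˢ closure (R true n) ⊆ G := by
  let P : Set (Set Y × Set Y) := {p ∈ insert ∅ (countableBasis Y) ×ˢ insert ∅ (countableBasis Y) |
    closure p.1 ×ˢ closure p.2 ⊆ G}
  have hP : P.Countable :=
    (((countable_countableBasis Y).insert ∅).prod ((countable_countableBasis Y).insert ∅)).mono
      (sep_subset _ _)
  have hempty : (∅, ∅) ∈ P := by simp [P]
  obtain ⟨p, hp⟩ := hP.exists_eq_range ⟨_, hempty⟩
  have hpP (n) : p n ∈ P := hp ▸ mem_range_self n
  have hopen {V : Set Y} (hV : V ∈ insert ∅ (countableBasis Y)) : IsOpen V := by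
    rcases hV with rfl | hV
    exacts [isOpen_empty, isOpen_of_mem_countableBasis hV]
  refine ⟨fun b n => bif b then (p n).2 else (p n).1, ?_, Subset.antisymm ?_ ?_, fun n => (hpP n).2⟩
  · rintro (_ | _) n
    exacts [hopen (hpP n).1.1, hopen (hpP n).1.2]
  · rintro ⟨y, y'⟩ hyy'
    obtain ⟨U, hU, V, hV, hUV⟩ := mem_nhds_prod_iff.1 (hG.mem_nhds hyy')
    obtain ⟨U', hU', hyU', hUU'⟩ := (isBasis_countableBasis Y).exists_closure_subset hU
    obtain ⟨V', hV', hyV', hVV'⟩ := (isBasis_countableBasis Y).exists_closure_subset hV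
    have hUV' : (U', V') ∈ P := ⟨⟨.inr hU', .inr hV'⟩, (Set.prod_mono hUU' hVV').trans hUV⟩
    obtain ⟨n, hn⟩ := hp ▸ hUV'
    exact mem_iUnion.2 ⟨n, by simp [hn, hyU', hyV']⟩
  · exact iUnion_subset fun n => (Set.prod_mono subset_closure subset_closure).trans (hpP n).2

section Polish

variable [TopologicalSpace Z] [PolishSpace Z] [MeasurableSpace Z] [BorelSpace Z]
  [TopologicalSpace Y] [PolishSpace Y] [MeasurableSpace Y] [BorelSpace Y]

theorem analyticSet_image_fst_inter_preimage_snd {S : Set (Z × Y)} (hS : AnalyticSet S)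
    {V : Set Y} (hV : MeasurableSet V) : AnalyticSet (Prod.fst '' (S ∩ Prod.snd ⁻¹' V)) :=
  (analyticSet_inter hS (measurable_snd hV).analyticSet).image_of_continuous continuous_fst

theorem analyticSet_splitBase {R : Bool → ℕ → Set Y} (hR : ∀ b n, MeasurableSet (R b n))
    {S : Set (Z × Y)} (hS : AnalyticSet S) : AnalyticSet (splitBase R S) :=
  .iUnion fun n => .iInter fun b => analyticSet_image_fst_inter_preimage_snd hS (hR b n)

theorem exists_isIndependentPiece_superset {R : Bool → ℕ → Set Y} (hR : ∀ b n, IsOpen (R b n))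
    {A S : Set (Z × Y)} (hA : MeasurableSet A) (hAclosed : ∀ z, IsClosed {y | (z, y) ∈ A})
    (hS : AnalyticSet S) (hSA : S ⊆ A) (hSsplit : splitBase R S = ∅) :
    ∃ B, IsIndependentPiece (⋃ n, R false n ×ˢ R true n) A B ∧ S ⊆ B := by
  have hproj (b n) : AnalyticSet (Prod.fst '' (S ∩ Prod.snd ⁻¹' R b n)) :=
    analyticSet_image_fst_inter_preimage_snd hS (hR b n).measurableSet
  have hsep (n) : MeasurablySeparable (Prod.fst '' (S ∩ Prod.snd ⁻¹' R false n))
      (Prod.fst '' (S ∩ Prod.snd ⁻¹' R true n)) :=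
    (hproj false n).measurablySeparable (hproj true n) <| disjoint_left.2 fun z hz hz' =>
      eq_empty_iff_forall_notMem.1 hSsplit z
        (mem_iUnion.2 ⟨n, mem_iInter.2 (Bool.forall_bool.2 ⟨hz, hz'⟩)⟩)
  choose C hfalse htrue hCm using hsep
  let D : Set (Z × Y) := ⋃ n, (C n ×ˢ R true n ∪ (C n)ᶜ ×ˢ R false n)
  have hDm : MeasurableSet D := .iUnion fun n =>
    ((hCm n).prod (hR true n).measurableSet).union ((hCm n).compl.prod (hR false n).measurableSet)
  have hDopen (z) : IsOpen {y | (z, y) ∈ D} := by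
    simp only [D, mem_iUnion, ofPred_exists]
    refine isOpen_iUnion fun n => ?_
    by_cases hz : z ∈ C n
    · simpa [hz] using hR true n
    · simpa [hz] using hR false n
  refine ⟨A \ D, ⟨hA.diff hDm, sdiff_subset, fun z => (hAclosed z).sdiff (hDopen z), ?_⟩, ?_⟩
  · intro z y y' hy hy' hyy'
    obtain ⟨n, hyR, hyR'⟩ := mem_iUnion.1 hyy'
    by_cases hz : z ∈ C n
    · exact hy'.2 (mem_iUnion.2 ⟨n, .inl ⟨hz, hyR'⟩⟩)
    · exact hy.2 (mem_iUnion.2 ⟨n, .inr ⟨hz, hyR⟩⟩)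
  · refine fun x hx => ⟨hSA hx, fun hxD => ?_⟩
    obtain ⟨n, ⟨hxC, hxR⟩ | ⟨hxC, hxR⟩⟩ := mem_iUnion.1 hxD
    · exact disjoint_left.1 (htrue n) ⟨x, ⟨hx, hxR⟩, rfl⟩ hxC
    · exact hxC (hfalse n ⟨x, ⟨hx, hxR⟩, rfl⟩)

end Polish

section Coverable

variable [MeasurableSpace Z] [TopologicalSpace Y] [MeasurableSpace Y] {ι : Type*}

/-- A family of sets `T i ⊆ Z × Y` is *fiber coverable* if countably many independent pieces of
`A` suffice to cover, for each `z`, the section over `z` of at least one of the sets `T i`.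
Failure of coverability is the inductive hypothesis in the construction of a large clique. -/
def IsFiberCoverable (G : Set (Y × Y)) (A : Set (Z × Y)) (T : ι → Set (Z × Y)) : Prop :=
  ∃ 𝓑 : Set (Set (Z × Y)), 𝓑.Countable ∧ (∀ B ∈ 𝓑, IsIndependentPiece G A B) ∧
    ∀ z, ∃ i, ∀ y, (z, y) ∈ T i → (z, y) ∈ ⋃₀ 𝓑

variable {G : Set (Y × Y)} {A : Set (Z × Y)} {T : ι → Set (Z × Y)}

theorem IsFiberCoverable.of_comp {κ : Type*} {e : κ → ι} (h : IsFiberCoverable G A (T ∘ e)) :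
    IsFiberCoverable G A T := by
  obtain ⟨𝓑, h𝓑, hpiece, hcover⟩ := h
  exact ⟨𝓑, h𝓑, hpiece, fun z => (hcover z).imp' e fun _ => id⟩

theorem exists_fiber_of_not_isFiberCoverable (h : ¬ IsFiberCoverable G A T) :
    ∃ z, ∀ i, ∃ y, (z, y) ∈ T i := by
  contrapose! h
  exact ⟨∅, countable_empty, by simp, fun z => (h z).imp fun i hi y hy => (hi y hy).elim⟩

theorem exists_countable_pieces_of_forall_isFiberCoverable {κ μ : Type*} [Countable μ]
    {T : μ → κ → Set (Z × Y)} (hT : ∀ m, IsFiberCoverable G A (T m)) :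
    ∃ 𝓑 : Set (Set (Z × Y)), 𝓑.Countable ∧ (∀ B ∈ 𝓑, IsIndependentPiece G A B) ∧
      ∀ z m, ∃ q, ∀ y, (z, y) ∈ T m q → (z, y) ∈ ⋃₀ 𝓑 := by
  choose 𝓑 h𝓑 hpiece hcover using hT
  refine ⟨⋃ m, 𝓑 m, countable_iUnion h𝓑, fun B hB => ?_, fun z m => ?_⟩
  · obtain ⟨m, hm⟩ := mem_iUnion.1 hB
    exact hpiece m B hm
  · obtain ⟨q, hq⟩ := hcover m z
    exact ⟨q, fun y hy => sUnion_mono (subset_iUnion 𝓑 m) (hq y hy)⟩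

theorem IsFiberCoverable.of_forall_choice [Finite ι] {κ : Type*} [Countable κ]
    {T' : ι → κ → Set (Z × Y)} (hT : ∀ i, T i ⊆ ⋃ j, T' i j)
    (h : ∀ c : ι → κ, IsFiberCoverable G A fun i => T' i (c i)) : IsFiberCoverable G A T := by
  obtain ⟨𝓑, h𝓑, hpiece, hcover⟩ := exists_countable_pieces_of_forall_isFiberCoverable h
  refine ⟨𝓑, h𝓑, hpiece, fun z => ?_⟩
  by_contra! hz
  choose y hyT hy using hz
  choose c hc using fun i => mem_iUnion.1 (hT i (hyT i))
  obtain ⟨i, hi⟩ := hcover z c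
  exact hy i (hi (y i) (hc i))

end Coverable

section Branching

variable [TopologicalSpace Z] [PolishSpace Z] [MeasurableSpace Z] [BorelSpace Z]
  [TopologicalSpace Y] [PolishSpace Y] [MeasurableSpace Y] [BorelSpace Y]
  {R : Bool → ℕ → Set Y} {A : Set (Z × Y)} {ι : Type*}

theorem IsFiberCoverable.of_forall_split [Finite ι] (hR : ∀ b n, IsOpen (R b n))
    (hA : MeasurableSet A) (hAclosed : ∀ z, IsClosed {y | (z, y) ∈ A}) {T : ι → Set (Z × Y)}
    (hT : ∀ i, AnalyticSet (T i)) (hTA : ∀ i, T i ⊆ A)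
    (h : ∀ n : ι → ℕ, IsFiberCoverable (⋃ n, R false n ×ˢ R true n) A
      fun q : ι × Bool => T q.1 ∩ Prod.snd ⁻¹' R q.2 (n q.1)) :
    IsFiberCoverable (⋃ n, R false n ×ˢ R true n) A T := by
  obtain ⟨𝓑, h𝓑, hpiece, hcover⟩ := exists_countable_pieces_of_forall_isFiberCoverable h
  have h𝓑m : MeasurableSet (⋃₀ 𝓑) := .sUnion h𝓑 fun B hB => (hpiece B hB).measurableSet
  have hT𝓑 (i) : AnalyticSet (T i \ ⋃₀ 𝓑) := analyticSet_inter (hT i) h𝓑m.compl.analyticSet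
  have hsplit : ⋂ i, splitBase R (T i \ ⋃₀ 𝓑) = ∅ := by
    refine eq_empty_of_forall_notMem fun z hz => ?_
    simp only [mem_iInter, mem_splitBase] at hz
    choose n y hyR hyT using hz
    obtain ⟨⟨i, b⟩, hib⟩ := hcover z n
    exact (hyT i b).2 (hib _ ⟨(hyT i b).1, hyR i b⟩)
  obtain ⟨D, hDm, hsplitD, hD⟩ := jointlyMeasurablySeparable_of_analyticSet
    (fun i => analyticSet_splitBase (fun b n => (hR b n).measurableSet) (hT𝓑 i)) hsplit
  have hB (i) : ∃ B, IsIndependentPiece (⋃ n, R false n ×ˢ R true n) A B ∧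
      (T i \ ⋃₀ 𝓑) ∩ Prod.fst ⁻¹' (D i)ᶜ ⊆ B := by
    refine exists_isIndependentPiece_superset hR hA hAclosed
      (analyticSet_inter (hT𝓑 i) (measurable_fst (hDm i).compl).analyticSet)
      (inter_subset_left.trans (sdiff_subset.trans (hTA i))) ?_
    refine eq_empty_of_forall_notMem fun z hz => ?_
    obtain ⟨n, hn⟩ := mem_splitBase.1 hz
    have hzD : z ∉ D i := (hn false).elim fun y hy => hy.2.2
    exact hzD (hsplitD i (mem_splitBase.2 ⟨n, fun b => (hn b).imp fun y hy => ⟨hy.1, hy.2.1⟩⟩))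
  choose B hBpiece hTB using hB
  refine ⟨𝓑 ∪ range B, h𝓑.union (countable_range B), ?_, fun z => ?_⟩
  · rintro _ (hB | ⟨i, rfl⟩)
    exacts [hpiece _ hB, hBpiece i]
  · obtain ⟨i, hi⟩ : ∃ i, z ∉ D i := by simpa using eq_empty_iff_forall_notMem.1 hD z
    refine ⟨i, fun y hy => ?_⟩
    by_cases hy𝓑 : (z, y) ∈ ⋃₀ 𝓑
    · exact sUnion_mono subset_union_left hy𝓑
    · exact ⟨B i, .inr ⟨i, rfl⟩, hTB i ⟨⟨hy, hy𝓑⟩, hi⟩⟩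

variable {φ : (ℕ → ℕ) → Z × Y}

theorem exists_not_isFiberCoverable_refinement {κ : Type*} [Finite ι] [Finite κ]
    (hR : ∀ b n, IsOpen (R b n)) (hA : MeasurableSet A)
    (hAclosed : ∀ z, IsClosed {y | (z, y) ∈ A}) (hφ : Continuous φ) (hφA : range φ ⊆ A)
    {U : ι → Set (ℕ → ℕ)} (hU : ∀ i, IsOpen (U i))
    (h : ¬ IsFiberCoverable (⋃ n, R false n ×ˢ R true n) A fun i => φ '' U i)
    (k : ℕ) (e : κ → ι × Bool) :
    ∃ (n : ι → ℕ) (c : κ → ℕ), ¬ IsFiberCoverable (⋃ n, R false n ×ˢ R true n) A fun q =>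
      φ '' (U (e q).1 ∩ {x | x k = c q ∧ (φ x).2 ∈ R (e q).2 (n (e q).1)}) := by
  contrapose! h
  refine .of_forall_split hR hA hAclosed (fun i => (hU i).analyticSet_image hφ)
    (fun i => (image_subset_range φ _).trans hφA) fun n => ?_
  refine IsFiberCoverable.of_comp (e := e) (.of_forall_choice (T' := fun q j =>
    φ '' (U (e q).1 ∩ {x | x k = j ∧ (φ x).2 ∈ R (e q).2 (n (e q).1)})) (fun q => ?_) (h n))
  rintro _ ⟨⟨x, hx, rfl⟩, hxR⟩
  exact mem_iUnion.2 ⟨x k, x, ⟨hx, rfl, hxR⟩, rfl⟩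

theorem exists_branching_scheme (hR : ∀ b n, IsOpen (R b n)) (hA : MeasurableSet A)
    (hAclosed : ∀ z, IsClosed {y | (z, y) ∈ A}) (hφ : Continuous φ) (hφA : range φ ⊆ A)
    (h : ¬ IsFiberCoverable (⋃ n, R false n ×ˢ R true n) A fun _ : Fin 0 → Bool => range φ) :
    ∃ (n : ∀ k, (Fin k → Bool) → ℕ) (c : ∀ k, (Fin (k + 1) → Bool) → ℕ)
      (U : ∀ k, (Fin k → Bool) → Set (ℕ → ℕ)),
      (∀ k, ¬ IsFiberCoverable (⋃ n, R false n ×ˢ R true n) A fun s => φ '' U k s) ∧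
      ∀ k s, U (k + 1) s = U k (Fin.init s) ∩
        {x | x k = c k s ∧ (φ x).2 ∈ R (s (Fin.last k)) (n k (Fin.init s))} := by
  let Stage (k : ℕ) := {U : (Fin k → Bool) → Set (ℕ → ℕ) // (∀ s, IsOpen (U s)) ∧
    ¬ IsFiberCoverable (⋃ n, R false n ×ˢ R true n) A fun s => φ '' U s}
  choose n c hnc using fun k (U : Stage k) => exists_not_isFiberCoverable_refinement hR hA hAclosed
    hφ hφA U.2.1 U.2.2 k fun s : Fin (k + 1) → Bool => (Fin.init s, s (Fin.last k))
  have hopen (k) (U : Stage k) (s : Fin (k + 1) → Bool) : IsOpen (U.1 (Fin.init s) ∩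
      {x | x k = c k U s ∧ (φ x).2 ∈ R (s (Fin.last k)) (n k U (Fin.init s))}) :=
    (U.2.1 _).inter (((isOpen_discrete {c k U s}).preimage (continuous_apply k)).and
      ((hR _ _).preimage hφ.snd))
  let U (k : ℕ) : Stage k := Nat.rec ⟨fun _ => univ, fun _ => isOpen_univ, by simpa using h⟩
    (fun k U => ⟨_, hopen k U, hnc k U⟩) k
  exact ⟨fun k => n k (U k), fun k => c k (U k), fun k => (U k).1, fun k => (U k).2.2,
    fun k s => rfl⟩

theorem exists_branching_approximation (hR : ∀ b n, IsOpen (R b n)) (hA : MeasurableSet A)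
    (hAclosed : ∀ z, IsClosed {y | (z, y) ∈ A}) (hφ : Continuous φ) (hφA : range φ ⊆ A)
    (h : ¬ IsFiberCoverable (⋃ n, R false n ×ˢ R true n) A fun _ : Fin 0 → Bool => range φ) :
    ∃ (n : ∀ k, (Fin k → Bool) → ℕ) (c : ∀ k, (Fin (k + 1) → Bool) → ℕ), ∀ k, ∃ z,
      ∀ σ : ℕ → Bool, ∃ x, (φ x).1 = z ∧ ∀ j < k, x j = c j (fun i => σ i) ∧
        (φ x).2 ∈ R (σ j) (n j fun i => σ i) := by
  obtain ⟨n, c, U, hU, hUsucc⟩ := exists_branching_scheme hR hA hAclosed hφ hφA h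
  have hmem (σ : ℕ → Bool) (x k) (hx : x ∈ U k fun i => σ i) (j) (hj : j < k) :
      x j = c j (fun i => σ i) ∧ (φ x).2 ∈ R (σ j) (n j fun i => σ i) := by
    induction k with
    | zero => simp at hj
    | succ k ih =>
      rw [hUsucc] at hx
      rcases Nat.lt_succ_iff_lt_or_eq.1 hj with hjk | rfl
      exacts [ih hx.1 hjk, hx.2]
  refine ⟨n, c, fun k => ?_⟩
  obtain ⟨z, hz⟩ := exists_fiber_of_not_isFiberCoverable (hU k)
  refine ⟨z, fun σ => ?_⟩
  obtain ⟨y, x, hx, hxy⟩ := hz fun i => σ i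
  exact ⟨x, by rw [hxy], hmem σ x k hx⟩

end Branching

theorem exists_forall_mem_closure_of_branching [TopologicalSpace Z] [T2Space Z]
    [TopologicalSpace Y] {R : Bool → ℕ → Set Y} {φ : (ℕ → ℕ) → Z × Y} (hφ : Continuous φ)
    {n : ∀ k, (Fin k → Bool) → ℕ} {c : ∀ k, (Fin (k + 1) → Bool) → ℕ}
    (h : ∀ k, ∃ z, ∀ σ : ℕ → Bool, ∃ x, (φ x).1 = z ∧ ∀ j < k, x j = c j (fun i => σ i) ∧
      (φ x).2 ∈ R (σ j) (n j fun i => σ i)) :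
    ∃ (z : Z) (X : (ℕ → Bool) → Y), (∀ σ, (z, X σ) ∈ range φ) ∧
      ∀ σ j, X σ ∈ closure (R (σ j) (n j fun i => σ i)) := by
  choose z x hxz hx using h
  let w (σ : ℕ → Bool) : ℕ → ℕ := fun j => c j fun i => σ i
  have hxw (σ) : Tendsto (fun k => φ (x k σ)) atTop (𝓝 (φ (w σ))) := by
    refine (hφ.tendsto _).comp (tendsto_pi_nhds.2 fun j => tendsto_const_nhds.congr' ?_)
    filter_upwards [eventually_gt_atTop j] with k hk using (hx k σ j hk).1.symm
  have hz (σ) : Tendsto z atTop (𝓝 (φ (w σ)).1) := by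
    simpa only [comp_def, hxz] using (continuous_fst.tendsto _).comp (hxw σ)
  refine ⟨(φ (w default)).1, fun σ => (φ (w σ)).2, fun σ => ⟨w σ, ?_⟩, fun σ j => ?_⟩
  · exact Prod.ext (tendsto_nhds_unique (hz σ) (hz default)) rfl
  · refine mem_closure_of_tendsto ((continuous_snd.tendsto _).comp (hxw σ)) ?_
    filter_upwards [eventually_gt_atTop j] with k hk using (hx k σ j hk).2

theorem pairwise_mem_or_mem_of_forall_mem_closure [TopologicalSpace Y] {R : Bool → ℕ → Set Y}
    {G : Set (Y × Y)} (hRG : ∀ n, closure (R false n) ×ˢ closure (R true n) ⊆ G)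
    {n : ∀ k, (Fin k → Bool) → ℕ} {X : (ℕ → Bool) → Y}
    (hX : ∀ σ j, X σ ∈ closure (R (σ j) (n j fun i => σ i))) :
    Pairwise fun σ τ => (X σ, X τ) ∈ G ∨ (X τ, X σ) ∈ G := by
  intro σ τ hne
  set j := PiNat.firstDiff σ τ
  have hres : (fun i : Fin j => σ i) = fun i : Fin j => τ i :=
    funext fun i => PiNat.apply_eq_of_lt_firstDiff i.2
  have hσ := hX σ j
  have hτ := hX τ j
  rw [← hres] at hτ
  have hστ : σ j ≠ τ j := PiNat.apply_firstDiff_ne hne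
  cases hσj : σ j <;> cases hτj : τ j <;> simp only [hσj, hτj] at hσ hτ hστ
  · exact (hστ rfl).elim
  · exact .inl (hRG _ ⟨hσ, hτ⟩)
  · exact .inr (hRG _ ⟨hτ, hσ⟩)
  · exact (hστ rfl).elim

/-- **Parametrized open graph dichotomy**. -/
theorem exists_eq_iUnion_isIndependentPiece_or_exists_clique [MeasurableSpace Z]
    [StandardBorelSpace Z] [TopologicalSpace Y] [PolishSpace Y] [MeasurableSpace Y] [BorelSpace Y]
    {G : Set (Y × Y)} (hG : IsOpen G) {A : Set (Z × Y)} (hA : MeasurableSet A)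
    (hAclosed : ∀ z, IsClosed {y | (z, y) ∈ A}) :
    (∃ B : ℕ → Set (Z × Y), (∀ n, IsIndependentPiece G A (B n)) ∧ A = ⋃ n, B n) ∨
      ∃ (z : Z) (X : (ℕ → Bool) → Y), (∀ σ, (z, X σ) ∈ A) ∧
        Pairwise fun σ τ => (X σ, X τ) ∈ G ∨ (X τ, X σ) ∈ G := by
  let := upgradeStandardBorel Z
  obtain ⟨R, hR, rfl, hRG⟩ := exists_isOpen_eq_iUnion_prod hG
  rcases AnalyticSet_def A ▸ hA.analyticSet with rfl | ⟨φ, hφ, rfl⟩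
  · exact .inl ⟨fun _ => ∅, fun _ => isIndependentPiece_empty _ _, by simp⟩
  by_cases hcov : IsFiberCoverable (⋃ n, R false n ×ˢ R true n) (range φ)
    fun _ : Fin 0 → Bool => range φ
  · obtain ⟨𝓑, h𝓑, hpiece, hcover⟩ := hcov
    obtain ⟨B, hB⟩ := (h𝓑.insert ∅).exists_eq_range (insert_nonempty _ _)
    have hBpiece (n) : IsIndependentPiece (⋃ n, R false n ×ˢ R true n) (range φ) (B n) := by
      rcases hB ▸ mem_range_self n with hn | hn
      exacts [hn ▸ isIndependentPiece_empty _ _, hpiece _ hn]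
    refine .inl ⟨B, hBpiece, Subset.antisymm (fun x hx => ?_)
      (iUnion_subset fun n => (hBpiece n).subset)⟩
    rw [← sUnion_range, ← hB]
    exact sUnion_mono (subset_insert _ _) ((hcover x.1).elim fun _ h => h x.2 hx)
  · obtain ⟨n, c, happrox⟩ :=
      exists_branching_approximation hR hA hAclosed hφ Subset.rfl hcov
    obtain ⟨z, X, hXA, hX⟩ := exists_forall_mem_closure_of_branching hφ happrox
    exact .inr ⟨z, X, hXA, pairwise_mem_or_mem_of_forall_mem_closure hRG hX⟩

end OpenGraphDichotomy

section Selectors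

theorem countable_of_isSeparable_of_pairwise_le_dist {ι E : Type*} [PseudoMetricSpace E]
    {s : Set E} (hs : IsSeparable s) {x : ι → E} (hxs : ∀ i, x i ∈ s) {ε : ℝ} (hε : 0 < ε)
    (hx : Pairwise fun i j => ε ≤ dist (x i) (x j)) : Countable ι := by
  obtain ⟨D, hD, hsD⟩ := hs
  have hnear (i) : ∃ d : D, dist (x i) d < ε / 2 := by
    simpa using Metric.mem_closure_iff.1 (hsD (hxs i)) (ε / 2) (half_pos hε)
  choose d hd using hnear
  have hd_inj : Injective d := by
    intro i j hij
    by_contra hne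
    have hclose : dist (x i) (x j) < ε := calc
      dist (x i) (x j) ≤ dist (x i) (d i) + dist (x j) (d i) := dist_triangle_right _ _ _
      _ < ε / 2 + ε / 2 := add_lt_add (hd i) (hij ▸ hd j)
      _ = ε := add_halves ε
    exact (hx hne).not_gt hclose
  have := hD.to_subtype
  exact hd_inj.countable

variable {Z Y E : Type*} [MeasurableSpace Z] [StandardBorelSpace Z] [TopologicalSpace Y]
  [PolishSpace Y] [MeasurableSpace Y] [BorelSpace Y] [PseudoMetricSpace E] {ρ : Y → E}
  {A : Set (Z × Y)}

theorem exists_eq_iUnion_isIndependentPiece_of_isSeparable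
    (hρ : LowerSemicontinuous fun p : Y × Y => dist (ρ p.1) (ρ p.2)) (hA : MeasurableSet A)
    (hAclosed : ∀ z, IsClosed {y | (z, y) ∈ A})
    (hsep : ∀ z, IsSeparable (ρ '' {y | (z, y) ∈ A})) {ε : ℝ} (hε : 0 < ε) :
    ∃ B : ℕ → Set (Z × Y),
      (∀ n, IsIndependentPiece {p | ε < dist (ρ p.1) (ρ p.2)} A (B n)) ∧ A = ⋃ n, B n := by
  refine (exists_eq_iUnion_isIndependentPiece_or_exists_clique (hρ.isOpen_preimage ε) hA
    hAclosed).resolve_right ?_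
  rintro ⟨z, X, hXA, hX⟩
  have hclique : Pairwise fun σ τ => ε ≤ dist (ρ (X σ)) (ρ (X τ)) := by
    intro σ τ hne
    rcases hX hne with h | h
    · exact (mem_Ioi.1 h).le
    · exact dist_comm (ρ (X τ)) (ρ (X σ)) ▸ (mem_Ioi.1 h).le
  have huncountable : Uncountable (ℕ → Bool) :=
    Cardinal.aleph0_lt_mk_iff.1 (by simpa using Cardinal.cantor Cardinal.aleph0)
  have hcountable : Countable (ℕ → Bool) := countable_of_isSeparable_of_pairwise_le_dist (hsep z)
    (fun σ => mem_image_of_mem ρ (hXA σ)) hε hclique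
  exact huncountable.not_countable hcountable

theorem exists_borel_selectors_normDense_general
    (hρ : LowerSemicontinuous fun p : Y × Y => dist (ρ p.1) (ρ p.2)) (hA : MeasurableSet A)
    (hne : ∀ z, {y | (z, y) ∈ A}.Nonempty) (hcpt : ∀ z, IsCompact {y | (z, y) ∈ A})
    (hsep : ∀ z, IsSeparable (ρ '' {y | (z, y) ∈ A})) :
    ∃ f : ℕ → Z → Y, (∀ n, Measurable (f n)) ∧ (∀ n z, (z, f n z) ∈ A) ∧
      ∀ z y, (z, y) ∈ A → ∀ ε, 0 < ε → ∃ n, dist (ρ (f n z)) (ρ y) < ε := by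
  choose B hB hAB using fun m : ℕ => exists_eq_iUnion_isIndependentPiece_of_isSeparable hρ hA
    (fun z => (hcpt z).isClosed) hsep (Nat.one_div_pos_of_nat (α := ℝ) (n := m))
  choose f hf hfA hfB using fun m n => exists_measurable_selector_of_subset hA hne hcpt
    (hB m n).measurableSet
    (fun z => (hcpt z).of_isClosed_subset ((hB m n).isClosed_section z)
      fun y hy => (hB m n).subset hy) (hB m n).subset
  refine ⟨fun k => f k.unpair.1 k.unpair.2, fun k => hf _ _, fun k => hfA _ _, ?_⟩
  intro z y hzy ε hε
  obtain ⟨m, hm⟩ := exists_nat_one_div_lt hε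
  obtain ⟨n, hn⟩ := mem_iUnion.1 (hAB m ▸ hzy)
  have hdist : dist (ρ (f m n z)) (ρ y) ≤ 1 / (m + 1) :=
    not_lt.1 ((hB m n).isFiberIndependent z _ _ (hfB m n z y hn) hn)
  exact ⟨Nat.pair m n, by simpa using hdist.trans_lt hm⟩

end Selectors

open scoped BoundedContinuousFunction

/-- The elements of `H` as bounded functions on `ℕ`, the type `ℕ →ᵇ [-1, 1]` carrying the
supremum metric. -/
def toBoundedFunction (f : H) : ℕ →ᵇ Icc (-1 : ℝ) 1 :=
  .mkOfDiscrete f 2 fun m n => by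
    have hm := (f m).2
    have hn := (f n).2
    rw [Subtype.dist_eq, Real.dist_eq, abs_le]
    constructor <;> linarith [hm.1, hm.2, hn.1, hn.2]

theorem dist_toBoundedFunction (f g : H) :
    dist (toBoundedFunction f) (toBoundedFunction g) = normDist f g :=
  BoundedContinuousFunction.dist_eq_iSup

theorem lowerSemicontinuous_dist_toBoundedFunction :
    LowerSemicontinuous fun p : H × H => dist (toBoundedFunction p.1) (toBoundedFunction p.2) := by
  simp only [BoundedContinuousFunction.dist_eq_iSup]
  refine lowerSemicontinuous_ciSup (fun p => ?_) fun n => Continuous.lowerSemicontinuous ?_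
  · exact ⟨_, forall_mem_range.2 fun n => BoundedContinuousFunction.dist_coe_le_dist n⟩
  · exact ((continuous_apply n).comp continuous_fst).dist ((continuous_apply n).comp continuous_snd)

theorem isSeparable_image_toBoundedFunction {S : Set H} (hS : NormSeparable S) :
    IsSeparable (toBoundedFunction '' S) := by
  obtain ⟨D, hD, -, hDS⟩ := hS
  refine ⟨toBoundedFunction '' D, hD.image _, ?_⟩
  rintro _ ⟨f, hf, rfl⟩
  refine Metric.mem_closure_iff.2 fun ε hε => ?_
  simpa [dist_toBoundedFunction] using hDS f hf ε hε

/-- **Proposition 2.** If `Z` is standard Borel and `A ⊆ Z × H` is Borel with every section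
`A_z` nonempty, compact and norm separable, then there is a sequence `(f_n)` of Borel
selectors of `A` such that `(f_n(z))` is norm dense in `A_z` for every `z`. -/
theorem exists_borel_selectors_normDense (Z : Type) [MeasurableSpace Z] [StandardBorelSpace Z]
    (A : Set (Z × H)) (hA : MeasurableSet A)
    (hne : ∀ z : Z, {f : H | (z, f) ∈ A}.Nonempty)
    (hcpt : ∀ z : Z, IsCompact {f : H | (z, f) ∈ A})
    (hsep : ∀ z : Z, NormSeparable {f : H | (z, f) ∈ A}) :
    ∃ f : ℕ → Z → H, (∀ n, Measurable (f n)) ∧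
      (∀ n z, (z, f n z) ∈ A) ∧
      (∀ z g, (z, g) ∈ A → ∀ δ : ℝ, 0 < δ → ∃ n, normDist (f n z) g < δ) := by
  simpa only [dist_toBoundedFunction] using exists_borel_selectors_normDense_general
    lowerSemicontinuous_dist_toBoundedFunction hA hne hcpt
    fun z => isSeparable_image_toBoundedFunction (hsep z)
end
end

section
/- Let Z be a standard Borel space and let A ⊆ Z × H be a Borel set such that for every z ∈ Z the section A_z is nonempty, compact, and norm separable. Then for every ε > 0 there exists a countable ordinal ξ_ε such that 𝔻_ε^{(ξ_ε)}(A_z) = ∅ for every z ∈ Z. -/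
noncomputable section

/-- The Szlenk-type derivative `𝔻_ε(K)`: points of `K` all of whose open neighbourhoods `U`
have `K ∩ U` of norm diameter greater than `ε`. -/
def Dstar (ε : ℝ) (K : Set H) : Set H :=
  {f | f ∈ K ∧ ∀ U : Set H, IsOpen U → f ∈ U → ε < normDiam (K ∩ U)}

/-- Transfinite iterates of a derivation on sets: `D^{(0)}(K) = K`,
`D^{(ξ+1)}(K) = D(D^{(ξ)}(K))`, and intersections at limit stages. -/
noncomputable def derivIter {α : Type*} (D : Set α → Set α) (K : Set α) (o : Ordinal) :
    Set α :=
  Ordinal.limitRecOn o K (fun _ ih => D ih) (fun o _ ih => ⋂ (ζ : Ordinal) (h : ζ < o), ih ζ h)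

/-!
A point survives one derivative exactly when every neighbourhood of it contains two points of the
set lying in the two open slabs `f m < p` and `q < f m` for some coordinate `m` and rationals with
`p + ε < q`. Repeated splitting therefore turns a point of the `n`-th derivative into a dyadic tree
of depth `n` of points of the same section, in which siblings are separated by slabs.

Write `A` as a continuous image of the Baire space, so that such trees have codes with countably
many finite restrictions. If the derivatives of the sections stay nonempty at all stages below
`ω₁`, then the pigeonhole principle for `ω₁` selects, one depth at a time, restrictions that extend
to codes of trees of every countable rank. The selected restrictions converge to the code of an
infinite tree, and continuity and the Hausdorff property place this tree in a single section.
Compactness yields a point for each of its `2^ℕ` branches, and these points are pairwise at norm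
distance more than `ε`, which contradicts norm separability.
-/

open Set Filter Topology MeasureTheory
open scoped Ordinal Cardinal

section DerivIter

variable {α : Type*} (D : Set α → Set α) (K : Set α)

theorem derivIter_zero : derivIter D K 0 = K :=
  Ordinal.limitRecOn_zero ..

theorem derivIter_add_one (ξ : Ordinal) : derivIter D K (ξ + 1) = D (derivIter D K ξ) :=
  Ordinal.limitRecOn_add_one ..

theorem derivIter_of_isSuccLimit {ξ : Ordinal} (hξ : Order.IsSuccLimit ξ) :
    derivIter D K ξ = ⋂ (ζ : Ordinal) (_ : ζ < ξ), derivIter D K ζ :=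
  Ordinal.limitRecOn_limit _ _ _ _ hξ

variable {D}

theorem derivIter_antitone (hD : ∀ S, D S ⊆ S) : Antitone (derivIter D K) := by
  intro ζ ξ hζξ
  induction ξ using Ordinal.limitRecOn with
  | zero => rw [nonpos_iff_eq_zero.1 hζξ]
  | add_one ξ ih =>
    rcases hζξ.eq_or_lt with rfl | hlt
    · rfl
    · rw [derivIter_add_one]
      exact (hD _).trans (ih (Order.lt_add_one_iff.1 hlt))
  | limit ξ hξ _ =>
    rcases hζξ.eq_or_lt with rfl | hlt
    · rfl
    · rw [derivIter_of_isSuccLimit D K hξ]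
      exact iInter₂_subset ζ hlt

theorem derivIter_subset (hD : ∀ S, D S ⊆ S) (ξ : Ordinal) : derivIter D K ξ ⊆ K := by
  simpa only [derivIter_zero] using derivIter_antitone K hD (zero_le : 0 ≤ ξ)

end DerivIter

section Pigeonhole

variable {X : Type*}

theorem exists_fiber_inter_nonempty_of_lt_omega_one {E : Type*} [Countable E]
    {Q : Ordinal → Set X} (hQ : Antitone Q) (hne : ∀ ξ < ω₁, (Q ξ).Nonempty) (π : X → E) :
    ∃ e, ∀ ξ < ω₁, (Q ξ ∩ π ⁻¹' {e}).Nonempty := by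
  by_contra! hempty
  choose rank rank_lt hrank using hempty
  obtain ⟨x, hx⟩ := hne (⨆ e, rank e) (Ordinal.iSup_lt_omega_one rank_lt)
  have hx_mem : x ∈ Q (rank (π x)) ∩ π ⁻¹' {π x} := ⟨hQ (Ordinal.le_iSup rank _) hx, rfl⟩
  simp only [hrank, mem_empty_iff_false] at hx_mem

theorem exists_seq_mem_of_forall_lt_omega_one {E : ℕ → Type*} [∀ n, Countable (E n)]
    {P : ℕ → Ordinal → Set X} (hP : ∀ n, Antitone (P n)) (π : ∀ n, X → E n)
    (hext : ∀ n ξ, ∀ x ∈ P n (ξ + 1), ∃ y ∈ P (n + 1) ξ, π n y = π n x)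
    (hne : ∀ ξ < ω₁, (P 0 ξ).Nonempty) :
    ∃ u : ℕ → X, ∀ n, u n ∈ P n 0 ∧ π n (u (n + 1)) = π n (u n) := by
  let Large (n : ℕ) (e : E n) : Prop := ∀ ξ < ω₁, (P n ξ ∩ π n ⁻¹' {e}).Nonempty
  have exists_large {n : ℕ} {Q : Ordinal → Set X} (hQ : Antitone Q) (hQP : ∀ ξ, Q ξ ⊆ P n ξ)
      (hQne : ∀ ξ < ω₁, (Q ξ).Nonempty) : ∃ x ∈ Q 0, Large n (π n x) := by
    obtain ⟨e, he⟩ := exists_fiber_inter_nonempty_of_lt_omega_one hQ hQne (π n)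
    obtain ⟨x, hxQ, rfl⟩ := he 0 (Ordinal.omega_pos 1)
    exact ⟨x, hxQ, fun ξ hξ => (he ξ hξ).mono (inter_subset_inter_left _ (hQP ξ))⟩
  have extend_large (n : ℕ) (x : X) (hx : Large n (π n x)) :
      ∃ y, (y ∈ P (n + 1) 0 ∧ Large (n + 1) (π (n + 1) y)) ∧ π n y = π n x := by
    obtain ⟨y, ⟨hyP, hyx⟩, hy⟩ :=
      exists_large (Q := fun ξ => P (n + 1) ξ ∩ π n ⁻¹' {π n x})
        (fun _ _ h => inter_subset_inter_left _ (hP _ h)) (fun _ => inter_subset_left)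
        fun ξ hξ => by
          obtain ⟨x₁, hx₁P, hx₁x⟩ := hx (ξ + 1) ((Cardinal.isSuccLimit_omega 1).add_one_lt hξ)
          obtain ⟨y, hyP, hyx₁⟩ := hext n ξ x₁ hx₁P
          exact ⟨y, hyP, hyx₁.trans hx₁x⟩
    exact ⟨y, ⟨hyP, hy⟩, hyx⟩
  obtain ⟨x₀, hx₀P, hx₀⟩ := exists_large (hP 0) (fun _ => subset_rfl) hne
  choose! next hnext hnext_eq using extend_large
  let u (n : ℕ) : X := Nat.rec x₀ next n
  have hu (n : ℕ) : u n ∈ P n 0 ∧ Large n (π n (u n)) := by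
    induction n with
    | zero => exact ⟨hx₀P, hx₀⟩
    | succ n ih => exact hnext n (u n) ih.2
  exact ⟨u, fun n => ⟨(hu n).1, hnext_eq n (u n) (hu n).2⟩⟩

end Pigeonhole

section Splitting

variable {X ι : Type*} (O : ι → Bool → Set X)

/-- The derivative attached to a family `O` of pairs of sets: it keeps the points of `K` all of
whose neighbourhoods in `K` meet both members of some pair. -/
def splitDeriv [TopologicalSpace X] (K : Set X) : Set X :=
  {f | f ∈ K ∧ ∀ U : Set X, IsOpen U → f ∈ U → ∃ i, ∀ b, (K ∩ U ∩ O i b).Nonempty}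

theorem splitDeriv_subset [TopologicalSpace X] (K : Set X) : splitDeriv O K ⊆ K :=
  fun _ hf => hf.1

/-- The Cantor scheme obtained by splitting the node `t` along the pair `O (d t)`. As for
`PiNat.res`, the most recent choice is the head of the word. -/
def splitCell (d : List Bool → ι) : List Bool → Set X
  | [] => univ
  | b :: t => O (d t) b ∩ splitCell d t

theorem splitCell_antitone (d : List Bool → ι) : CantorScheme.Antitone (splitCell O d) :=
  fun _ _ => inter_subset_right

variable {O}

theorem isOpen_splitCell [TopologicalSpace X] (hO : ∀ i b, IsOpen (O i b)) (d : List Bool → ι)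
    (s : List Bool) : IsOpen (splitCell O d s) := by
  induction s with
  | nil => exact isOpen_univ
  | cons b t ih => exact (hO _ _).inter ih

theorem splitCell_congr {d d' : List Bool → ι} {s : List Bool}
    (h : ∀ t : List Bool, t.length < s.length → d t = d' t) :
    splitCell O d s = splitCell O d' s := by
  induction s with
  | nil => rfl
  | cons b t ih =>
    have htail (r : List Bool) (hr : r.length < t.length) : d r = d' r :=
      h r (hr.trans t.length.lt_succ_self)
    rw [splitCell, splitCell, h t t.length.lt_succ_self, ih htail]

theorem eventually_splitCell_eq {κ : Type*} {l : Filter κ} {d : κ → List Bool → ι}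
    {d' : List Bool → ι} (h : ∀ t, ∀ᶠ n in l, d n t = d' t) (s : List Bool) :
    ∀ᶠ n in l, splitCell O (d n) s = splitCell O d' s := by
  have hall := (eventually_all_finite (List.finite_length_lt Bool s.length)).2 fun t _ => h t
  exact hall.mono fun n hn => splitCell_congr hn

theorem nonempty_inter_iInter_closure_splitCell [TopologicalSpace X] {K : Set X} (hK : IsCompact K)
    {d : List Bool → ι} (hd : ∀ s, (K ∩ closure (splitCell O d s)).Nonempty) (α : ℕ → Bool) :
    (K ∩ ⋂ n, closure (splitCell O d (PiNat.res α n))).Nonempty := by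
  by_contra! hempty
  have hanti : Antitone fun n => closure (splitCell O d (PiNat.res α n)) :=
    antitone_nat_of_succ_le fun n => closure_mono (splitCell_antitone O d _ (α n))
  obtain ⟨n, hn⟩ := hK.elim_directed_family_closed _ (fun _ => isClosed_closure) hempty
    hanti.directed_ge
  exact (hd _).ne_empty hn

theorem exists_separated_branches [TopologicalSpace X] {K : Set X} (hK : IsCompact K)
    {d : List Bool → ι} (hd : ∀ s, (K ∩ closure (splitCell O d s)).Nonempty) :
    ∃ F : (ℕ → Bool) → X, (∀ α, F α ∈ K) ∧
      ∀ α β, α ≠ β → ∃ i b, F α ∈ closure (O i b) ∧ F β ∈ closure (O i !b) := by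
  choose F hFK hF using nonempty_inter_iInter_closure_splitCell hK hd
  have hF_mem (α : ℕ → Bool) (n : ℕ) : F α ∈ closure (O (d (PiNat.res α n)) (α n)) :=
    closure_mono inter_subset_left (mem_iInter.1 (hF α) (n + 1))
  refine ⟨F, hFK, fun α β hne => ?_⟩
  set n := PiNat.firstDiff α β
  have hres : PiNat.res α n = PiNat.res β n :=
    PiNat.res_eq_res.2 fun _ => PiNat.apply_eq_of_lt_firstDiff
  have hβ : β n = !α n := Bool.eq_not.2 (PiNat.apply_firstDiff_ne hne).symm
  exact ⟨d (PiNat.res α n), α n, hF_mem α n, hres ▸ hβ ▸ hF_mem β n⟩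

end Splitting

section TreeCode

instance finite_words_length_lt (n : ℕ) : Finite {s : List Bool | s.length < n} :=
  (List.finite_length_lt Bool n).to_subtype

/-- Codes for dyadic trees in a continuous image of the Baire space: a Baire space point and a
splitting index at every node. -/
abbrev TreeCode (ι : Type*) : Type _ := (List Bool → ℕ → ℕ) × (List Bool → ι)

variable {ι : Type*}

/-- The part of a code that is visible at stage `n`: the nodes of depth less than `n`, with the
first `n` digits of their Baire space points. -/
def TreeCode.restrict (n : ℕ) (x : TreeCode ι) :
    {s : List Bool | s.length < n} → (Fin n → ℕ) × ι :=
  fun s => (fun k => x.1 s k, x.2 s)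

theorem TreeCode.restrict_eq_iff {n : ℕ} {x y : TreeCode ι} :
    x.restrict n = y.restrict n ↔
      ∀ s : List Bool, s.length < n → (∀ k < n, x.1 s k = y.1 s k) ∧ x.2 s = y.2 s := by
  simp [restrict, funext_iff, Fin.forall_iff, forall_and]

theorem TreeCode.exists_limit_of_restrict_eq [Nonempty ι] {u : ℕ → TreeCode ι}
    (hu : ∀ n, (u (n + 1)).restrict n = (u n).restrict n) :
    ∃ x : TreeCode ι, (∀ s, Tendsto (fun n => (u n).1 s) atTop (𝓝 (x.1 s))) ∧
      ∀ s, ∀ᶠ n in atTop, (u n).2 s = x.2 s := by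
  have hpoint (s : List Bool) (k : ℕ) : EventuallyConst (fun n => (u n).1 s k) atTop :=
    eventuallyConst_atTop_nat.2 ⟨s.length + k + 1, fun n hn =>
      (restrict_eq_iff.1 (hu n) s (by lia)).1 k (by lia)⟩
  have hindex (s : List Bool) : EventuallyConst (fun n => (u n).2 s) atTop :=
    eventuallyConst_atTop_nat.2 ⟨s.length + 1, fun n hn =>
      (restrict_eq_iff.1 (hu n) s (by lia)).2⟩
  simp only [eventuallyConst_iff_exists_eventuallyEq] at hpoint hindex
  choose w hw using hpoint
  choose d hd using hindex
  exact ⟨(w, d), fun s => tendsto_pi_nhds.2 fun k => tendsto_const_nhds.congr' (hw s k).symm, hd⟩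

/-- The code obtained from `x` by splitting each node `t` of depth `n` along `i t` and placing
`v t b` at its child `b :: t`. -/
def TreeCode.splitLevel (n : ℕ) (x : TreeCode ι) (i : List Bool → ι)
    (v : List Bool → Bool → ℕ → ℕ) : TreeCode ι :=
  (fun
    | [] => x.1 []
    | b :: t => if t.length = n then v t b else x.1 (b :: t),
   fun t => if t.length = n then i t else x.2 t)

section SplitLevel

variable {X : Type*} {O : ι → Bool → Set X} {n : ℕ} (x : TreeCode ι) (i : List Bool → ι)
  (v : List Bool → Bool → ℕ → ℕ)

theorem TreeCode.splitLevel_fst_of_length_le {s : List Bool} (hs : s.length ≤ n) :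
    (x.splitLevel n i v).1 s = x.1 s := by
  cases s with
  | nil => rfl
  | cons b t => exact if_neg (Nat.lt_of_succ_le hs).ne

theorem TreeCode.splitLevel_snd_of_length_lt {s : List Bool} (hs : s.length < n) :
    (x.splitLevel n i v).2 s = x.2 s :=
  if_neg hs.ne

theorem TreeCode.splitLevel_fst_cons {t : List Bool} (ht : t.length = n) (b : Bool) :
    (x.splitLevel n i v).1 (b :: t) = v t b :=
  if_pos ht

theorem TreeCode.splitLevel_snd_of_length_eq {t : List Bool} (ht : t.length = n) :
    (x.splitLevel n i v).2 t = i t :=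
  if_pos ht

theorem TreeCode.splitCell_splitLevel_of_length_le {s : List Bool} (hs : s.length ≤ n) :
    splitCell O (x.splitLevel n i v).2 s = splitCell O x.2 s :=
  splitCell_congr fun _ ht => x.splitLevel_snd_of_length_lt i v (ht.trans_le hs)

theorem TreeCode.restrict_splitLevel : (x.splitLevel n i v).restrict n = x.restrict n :=
  restrict_eq_iff.2 fun _ hs =>
    ⟨fun _ _ => by rw [x.splitLevel_fst_of_length_le i v hs.le],
      x.splitLevel_snd_of_length_lt i v hs⟩

end SplitLevel

variable {Z X : Type*} [TopologicalSpace X]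

/-- The codes whose nodes of depth at most `n` are points of the `ξ`-th derivative of a single
section of `range φ`, each lying in its cell of the splitting scheme. -/
def treeCodes (O : ι → Bool → Set X) (φ : (ℕ → ℕ) → Z × X) (n : ℕ) (ξ : Ordinal) :
    Set (TreeCode ι) :=
  {x | ∃ z, ∀ s : List Bool, s.length ≤ n →
    ∃ f ∈ splitCell O x.2 s ∩ derivIter (splitDeriv O) {f | (z, f) ∈ range φ} ξ,
      φ (x.1 s) = (z, f)}

variable {O : ι → Bool → Set X} {φ : (ℕ → ℕ) → Z × X}

theorem treeCodes_antitone (n : ℕ) : Antitone (treeCodes O φ n) := by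
  rintro ζ ξ hζξ x ⟨z, hx⟩
  refine ⟨z, fun s hs => ?_⟩
  obtain ⟨f, ⟨hcell, hf⟩, hφ⟩ := hx s hs
  exact ⟨f, ⟨hcell, derivIter_antitone _ (splitDeriv_subset O) hζξ hf⟩, hφ⟩

theorem treeCodes_zero_nonempty [Nonempty ι] {ξ : Ordinal} {z : Z}
    (h : (derivIter (splitDeriv O) {f | (z, f) ∈ range φ} ξ).Nonempty) :
    (treeCodes O φ 0 ξ).Nonempty := by
  obtain ⟨f, hf⟩ := h
  obtain ⟨w, hw⟩ := derivIter_subset _ (splitDeriv_subset O) ξ hf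
  refine ⟨(fun _ => w, fun _ => Classical.arbitrary ι), z, fun s hs => ⟨f, ⟨?_, hf⟩, hw⟩⟩
  rw [List.length_eq_zero_iff.1 (Nat.le_zero.1 hs)]
  exact mem_univ f

theorem exists_split_of_mem_derivIter_add_one {ξ : Ordinal} {z : Z} {f : X} {U : Set X}
    (hf : f ∈ derivIter (splitDeriv O) {f | (z, f) ∈ range φ} (ξ + 1)) (hU : IsOpen U)
    (hfU : f ∈ U) :
    ∃ i, ∀ b, ∃ w, ∃ g ∈ (O i b ∩ U) ∩ derivIter (splitDeriv O) {f | (z, f) ∈ range φ} ξ,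
      φ w = (z, g) := by
  rw [derivIter_add_one] at hf
  obtain ⟨i, hi⟩ := hf.2 U hU hfU
  refine ⟨i, fun b => ?_⟩
  obtain ⟨g, ⟨hg, hgU⟩, hgO⟩ := hi b
  obtain ⟨w, hw⟩ := derivIter_subset _ (splitDeriv_subset O) ξ hg
  exact ⟨w, g, ⟨⟨hgO, hgU⟩, hg⟩, hw⟩

theorem exists_treeCodes_succ [Nonempty ι] (hO : ∀ i b, IsOpen (O i b)) (n : ℕ) (ξ : Ordinal)
    {x : TreeCode ι} (hx : x ∈ treeCodes O φ n (ξ + 1)) :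
    ∃ y ∈ treeCodes O φ (n + 1) ξ, y.restrict n = x.restrict n := by
  obtain ⟨z, hz⟩ := hx
  have hsplit (t : List Bool) (ht : t.length ≤ n) : ∃ i, ∀ b, ∃ w,
      ∃ g ∈ (O i b ∩ splitCell O x.2 t) ∩ derivIter (splitDeriv O) {f | (z, f) ∈ range φ} ξ,
        φ w = (z, g) := by
    obtain ⟨f, ⟨hcell, hf⟩, -⟩ := hz t ht
    exact exists_split_of_mem_derivIter_add_one hf (isOpen_splitCell hO _ _) hcell
  choose! i hi using hsplit
  choose! v hv using hi
  refine ⟨x.splitLevel n i v, ⟨z, fun s hs => ?_⟩, x.restrict_splitLevel i v⟩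
  rcases hs.lt_or_eq with hlt | heq
  · have hsn : s.length ≤ n := Nat.lt_succ_iff.1 hlt
    rw [x.splitCell_splitLevel_of_length_le i v hsn, x.splitLevel_fst_of_length_le i v hsn]
    obtain ⟨f, ⟨hcell, hf⟩, hφf⟩ := hz s hsn
    exact ⟨f, ⟨hcell, derivIter_antitone _ (splitDeriv_subset O) le_self_add hf⟩, hφf⟩
  · obtain ⟨b, t, rfl⟩ := List.exists_cons_of_length_eq_add_one heq
    have ht : t.length = n := Nat.succ_injective heq
    rw [splitCell, x.splitLevel_snd_of_length_eq i v ht,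
      x.splitCell_splitLevel_of_length_le i v ht.le, x.splitLevel_fst_cons i v ht]
    exact hv t ht.le b

theorem exists_section_splitting_of_tendsto [TopologicalSpace Z] [T2Space Z] (hφ : Continuous φ)
    {u : ℕ → TreeCode ι} (hu : ∀ n, u n ∈ treeCodes O φ n 0) {x : TreeCode ι}
    (hpoint : ∀ s, Tendsto (fun n => (u n).1 s) atTop (𝓝 (x.1 s)))
    (hindex : ∀ s, ∀ᶠ n in atTop, (u n).2 s = x.2 s) :
    ∃ z, ∀ s, ({f | (z, f) ∈ range φ} ∩ closure (splitCell O x.2 s)).Nonempty := by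
  choose z hz using hu
  have hlim (s : List Bool) : Tendsto (fun n => φ ((u n).1 s)) atTop (𝓝 (φ (x.1 s))) :=
    (hφ.tendsto _).comp (hpoint s)
  have hfst (s : List Bool) : Tendsto z atTop (𝓝 (φ (x.1 s)).1) := by
    refine hlim s |>.fst_nhds.congr' ?_
    filter_upwards [eventually_ge_atTop s.length] with n hn
    obtain ⟨f, -, hf⟩ := hz n s hn
    rw [hf]
  have hcell (s : List Bool) : (φ (x.1 s)).2 ∈ closure (splitCell O x.2 s) := by
    refine mem_closure_of_tendsto (hlim s).snd_nhds ?_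
    filter_upwards [eventually_ge_atTop s.length, eventually_splitCell_eq hindex s] with n hn heq
    obtain ⟨f, ⟨hf, -⟩, hφf⟩ := hz n s hn
    rwa [hφf, ← heq]
  refine ⟨(φ (x.1 [])).1, fun s => ⟨(φ (x.1 s)).2, ?_, hcell s⟩⟩
  rw [tendsto_nhds_unique (hfst []) (hfst s)]
  exact mem_range_self (x.1 s)

theorem exists_lt_omega_one_derivIter_splitDeriv_eq_empty [TopologicalSpace Z] [T2Space Z]
    [Countable ι] [Nonempty ι] (hO : ∀ i b, IsOpen (O i b)) {A : Set (Z × X)} (hA : AnalyticSet A)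
    (hsplit : ∀ z (d : List Bool → ι), ∃ s, {f | (z, f) ∈ A} ∩ closure (splitCell O d s) = ∅) :
    ∃ ξ < ω₁, ∀ z, derivIter (splitDeriv O) {f | (z, f) ∈ A} ξ = ∅ := by
  by_contra! hderiv
  rw [AnalyticSet] at hA
  obtain rfl | ⟨φ, hφ, rfl⟩ := hA
  · obtain ⟨z, f, hf⟩ := hderiv 0 (Ordinal.omega_pos 1)
    exact derivIter_subset _ (splitDeriv_subset O) 0 hf
  obtain ⟨u, hu⟩ := exists_seq_mem_of_forall_lt_omega_one (P := treeCodes O φ) treeCodes_antitone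
    TreeCode.restrict (fun n ξ _ => exists_treeCodes_succ hO n ξ) fun ξ hξ =>
      (hderiv ξ hξ).elim fun _ => treeCodes_zero_nonempty
  obtain ⟨x, hpoint, hindex⟩ := TreeCode.exists_limit_of_restrict_eq fun n => (hu n).2
  obtain ⟨z, hz⟩ := exists_section_splitting_of_tendsto hφ (fun n => (hu n).1) hpoint hindex
  obtain ⟨s, hs⟩ := hsplit z x.2
  exact (hz s).ne_empty hs

end TreeCode

section NormDist

theorem abs_apply_sub_apply_le_two (f g : H) (n : ℕ) : |(f n : ℝ) - g n| ≤ 2 := by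
  obtain ⟨hf, hf'⟩ := (f n).2
  obtain ⟨hg, hg'⟩ := (g n).2
  exact abs_le.2 ⟨by linarith, by linarith⟩

theorem abs_apply_sub_apply_le_normDist (f g : H) (n : ℕ) : |(f n : ℝ) - g n| ≤ normDist f g :=
  le_ciSup (f := fun n => |(f n : ℝ) - g n|)
    ⟨2, forall_mem_range.2 (abs_apply_sub_apply_le_two f g)⟩ n

theorem normDist_comm (f g : H) : normDist f g = normDist g f := by
  simp only [normDist, abs_sub_comm]

theorem normDist_triangle (f g h : H) : normDist f h ≤ normDist f g + normDist g h :=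
  ciSup_le fun n => (abs_sub_le _ (g n : ℝ) _).trans
    (add_le_add (abs_apply_sub_apply_le_normDist f g n) (abs_apply_sub_apply_le_normDist g h n))

theorem normDist_le_normDiam {S : Set H} {f g : H} (hf : f ∈ S) (hg : g ∈ S) :
    normDist f g ≤ normDiam S := by
  refine le_csSup ⟨2, ?_⟩ ⟨f, hf, g, hg, rfl⟩
  rintro _ ⟨f, -, g, -, rfl⟩
  exact ciSup_le (abs_apply_sub_apply_le_two f g)

theorem lt_normDiam_iff {S : Set H} {ε : ℝ} (hε : 0 ≤ ε) :
    ε < normDiam S ↔ ∃ f ∈ S, ∃ g ∈ S, ∃ m, (f m : ℝ) + ε < g m := by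
  constructor
  · intro h
    have hne : {d : ℝ | ∃ f ∈ S, ∃ g ∈ S, d = normDist f g}.Nonempty := by
      by_contra! hempty
      rw [normDiam, hempty, Real.sSup_empty] at h
      exact hε.not_gt h
    obtain ⟨_, ⟨f, hf, g, hg, rfl⟩, hdist⟩ := exists_lt_of_lt_csSup hne h
    obtain ⟨m, hm⟩ := exists_lt_of_lt_ciSup hdist
    rcases lt_abs.1 hm with hm | hm
    · exact ⟨g, hg, f, hf, m, by linarith⟩
    · exact ⟨f, hf, g, hg, m, by linarith⟩
  · rintro ⟨f, hf, g, hg, m, hm⟩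
    calc ε < (g m : ℝ) - f m := by linarith
      _ ≤ |(g m : ℝ) - f m| := le_abs_self _
      _ ≤ normDist g f := abs_apply_sub_apply_le_normDist g f m
      _ ≤ normDiam S := normDist_le_normDiam hg hf

theorem NormSeparable.countable_of_lt_normDist {S : Set H} (hS : NormSeparable S) {ε : ℝ}
    (hε : 0 < ε) {κ : Type*} {F : κ → H} (hF : ∀ a, F a ∈ S)
    (hdist : ∀ a b, a ≠ b → ε < normDist (F a) (F b)) : Countable κ := by
  obtain ⟨D, hD, -, hdense⟩ := hS
  choose g hgD hg using fun a => hdense (F a) (hF a) (ε / 2) (half_pos hε)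
  have hinj : Function.Injective g := by
    intro a b hab
    by_contra hne
    have hlt : normDist (F a) (F b) < ε :=
      calc normDist (F a) (F b) ≤ normDist (F a) (g a) + normDist (g a) (F b) :=
            normDist_triangle _ _ _
        _ = normDist (F a) (g a) + normDist (F b) (g b) := by rw [normDist_comm (g a), hab]
        _ < ε / 2 + ε / 2 := add_lt_add (hg a) (hg b)
        _ = ε := add_halves ε
    exact lt_asymm hlt (hdist a b hne)
  have : Countable D := hD
  exact (hinj.codRestrict hgD).countable

end NormDist

section Gap

/-- A coordinate `m` with rational thresholds `p`, `q` more than `ε` apart, as a triple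
`(m, p, q)`. -/
abbrev Gap (ε : ℝ) : Type := {d : ℕ × ℚ × ℚ // (d.2.1 : ℝ) + ε < d.2.2}

instance Gap.nonempty (ε : ℝ) : Nonempty (Gap ε) :=
  let ⟨q, hq⟩ := exists_rat_gt (((0 : ℚ) : ℝ) + ε)
  ⟨⟨(0, 0, q), hq⟩⟩

variable {ε : ℝ}

/-- The two open slabs cut out by a gap `(m, p, q)`: `f m < p` and `q < f m`. -/
def Gap.slab (d : Gap ε) : Bool → Set H
  | false => {f | (f d.1.1 : ℝ) < d.1.2.1}
  | true => {f | (d.1.2.2 : ℝ) < f d.1.1}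

theorem Gap.isOpen_slab (d : Gap ε) (b : Bool) : IsOpen (d.slab b) := by
  cases b <;> exact isOpen_lt (by fun_prop) (by fun_prop)

theorem Gap.le_of_mem_closure_slab_false {d : Gap ε} {f : H} (hf : f ∈ closure (d.slab false)) :
    (f d.1.1 : ℝ) ≤ d.1.2.1 :=
  have hsub : d.slab false ⊆ {f | (f d.1.1 : ℝ) ≤ d.1.2.1} :=
    ofPred_subset_ofPred.2 fun _ => le_of_lt
  closure_minimal hsub (isClosed_le (by fun_prop) (by fun_prop)) hf

theorem Gap.le_of_mem_closure_slab_true {d : Gap ε} {f : H} (hf : f ∈ closure (d.slab true)) :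
    (d.1.2.2 : ℝ) ≤ f d.1.1 :=
  have hsub : d.slab true ⊆ {f | (d.1.2.2 : ℝ) ≤ f d.1.1} :=
    ofPred_subset_ofPred.2 fun _ => le_of_lt
  closure_minimal hsub (isClosed_le (by fun_prop) (by fun_prop)) hf

theorem Gap.lt_normDist_of_mem_closure_slab {d : Gap ε} {f g : H} {b : Bool}
    (hf : f ∈ closure (d.slab b)) (hg : g ∈ closure (d.slab !b)) : ε < normDist f g := by
  have hlt {f g : H} (hf : f ∈ closure (d.slab false)) (hg : g ∈ closure (d.slab true)) :
      ε < normDist f g := by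
    have hgap := d.2
    have hdist := (neg_le_abs _).trans (abs_apply_sub_apply_le_normDist f g d.1.1)
    linarith [le_of_mem_closure_slab_false hf, le_of_mem_closure_slab_true hg]
  cases b with
  | false => exact hlt hf hg
  | true => exact normDist_comm g f ▸ hlt hg hf

theorem exists_gap_iff {S : Set H} :
    (∃ d : Gap ε, ∀ b, (S ∩ d.slab b).Nonempty) ↔
      ∃ f ∈ S, ∃ g ∈ S, ∃ m, (f m : ℝ) + ε < g m := by
  constructor
  · rintro ⟨⟨⟨m, p, q⟩, hpq⟩, hd⟩
    obtain ⟨f, hf, hfp⟩ := hd false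
    obtain ⟨g, hg, hqg⟩ := hd true
    simp only [Gap.slab, mem_ofPred_eq] at hfp hqg hpq
    exact ⟨f, hf, g, hg, m, by linarith⟩
  · rintro ⟨f, hf, g, hg, m, hfg⟩
    obtain ⟨p, hfp, hpg⟩ := exists_rat_btwn (lt_sub_iff_add_lt.2 hfg)
    obtain ⟨q, hpq, hqg⟩ := exists_rat_btwn (lt_sub_iff_add_lt.1 hpg)
    exact ⟨⟨(m, p, q), hpq⟩, Bool.forall_bool.2 ⟨⟨f, hf, hfp⟩, g, hg, hqg⟩⟩

theorem Dstar_eq_splitDeriv (hε : 0 ≤ ε) : Dstar ε = splitDeriv (Gap.slab (ε := ε)) := by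
  ext K f
  simp only [Dstar, splitDeriv, lt_normDiam_iff hε, exists_gap_iff]

theorem NormSeparable.exists_inter_closure_splitCell_eq_empty {K : Set H} (hsep : NormSeparable K)
    (hK : IsCompact K) (hε : 0 < ε) (d : List Bool → Gap ε) :
    ∃ s, K ∩ closure (splitCell Gap.slab d s) = ∅ := by
  by_contra! hd
  have hcard : #(ℕ → Bool) = 𝔠 := by simp
  obtain ⟨F, hFK, hF⟩ := exists_separated_branches hK hd
  have hcountable : Countable (ℕ → Bool) := hsep.countable_of_lt_normDist hε hFK fun α β hne =>
    let ⟨_, _, hα, hβ⟩ := hF α β hne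
    Gap.lt_normDist_of_mem_closure_slab hα hβ
  exact Cardinal.aleph0_lt_continuum.not_ge (hcard ▸ Cardinal.mk_le_aleph0)

end Gap

theorem exists_uniform_countable_rank_general {Z : Type*} [TopologicalSpace Z] [T2Space Z]
    {A : Set (Z × H)} (hA : AnalyticSet A) (hcpt : ∀ z, IsCompact {f | (z, f) ∈ A})
    (hsep : ∀ z, NormSeparable {f | (z, f) ∈ A}) {ε : ℝ} (hε : 0 < ε) :
    ∃ ξ : Ordinal, ξ.card ≤ ℵ₀ ∧ ∀ z, derivIter (Dstar ε) {f | (z, f) ∈ A} ξ = ∅ := by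
  obtain ⟨ξ, hξ, hempty⟩ := exists_lt_omega_one_derivIter_splitDeriv_eq_empty
    (O := Gap.slab (ε := ε)) Gap.isOpen_slab hA fun z =>
      (hsep z).exists_inter_closure_splitCell_eq_empty (hcpt z) hε
  rw [Cardinal.lt_omega_iff_card_lt, Cardinal.lt_aleph_one_iff] at hξ
  exact ⟨ξ, hξ, Dstar_eq_splitDeriv hε.le ▸ hempty⟩

/-- **Boundedness.** If `Z` is standard Borel and `A ⊆ Z × H` is Borel with nonempty compact
norm separable sections, then for every `ε > 0` there is a single countable ordinal `ξ_ε`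
such that `𝔻_ε^{(ξ_ε)}(A_z) = ∅` for every `z ∈ Z`. -/
theorem exists_uniform_countable_rank (Z : Type) [MeasurableSpace Z] [StandardBorelSpace Z]
    (A : Set (Z × H)) (hA : MeasurableSet A)
    (hne : ∀ z : Z, {f : H | (z, f) ∈ A}.Nonempty)
    (hcpt : ∀ z : Z, IsCompact {f : H | (z, f) ∈ A})
    (hsep : ∀ z : Z, NormSeparable {f : H | (z, f) ∈ A})
    (ε : ℝ) (hε : 0 < ε) :
    ∃ ξ : Ordinal, ξ.card ≤ Cardinal.aleph0 ∧
      ∀ z : Z, derivIter (Dstar ε) {f : H | (z, f) ∈ A} ξ = ∅ := by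
  let := upgradeStandardBorel Z
  exact exists_uniform_countable_rank_general hA.analyticSet hcpt hsep hε
end
end
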